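/- Stolarsky's invariance principle: Let d ≥ 2 and let x_1, …, x_N be any N points on the unit sphere S^d ⊂ R^{d+1}. Then (1/N²) ∑_{j=1}^N ∑_{k=1}^N |x_j − x_k| + (H_d(S^d)/H_d(B^d)) · [D_{L2,C}(X_N)]² = ∫_{S^d} ∫_{S^d} |x − y| dσ_d(x) dσ_d(y), where H_d(S^d)/H_d(B^d) is the ratio of the surface area of S^d to the volume of the unit ball B^d in R^d. -/

import Mathlib

open MeasureTheory Metric Real Filter
open scoped BigOperators ENNReal NNReal RealInnerProductSpace Topology

noncomputable section

/-- Normalized uniform (surface) probability measure `σ_d` on the unit sphere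
`S^d ⊂ ℝ^{d+1}`, defined as normalized `d`-dimensional Hausdorff measure. -/
def sigmaMeasure (d : ℕ) : Measure (EuclideanSpace ℝ (Fin (d + 1))) :=
  (μH[(d : ℝ)] (sphere (0 : EuclideanSpace ℝ (Fin (d + 1))) 1))⁻¹ •
    μH[(d : ℝ)].restrict (sphere (0 : EuclideanSpace ℝ (Fin (d + 1))) 1)

/-- Squared spherical cap `L²` discrepancy of the `N`-point configuration `x` on `S^d`:
`∫_{-1}^{1} ∫_{S^d} |#{k : x_k ∈ C(y;t)}/N − σ_d(C(y;t))|² dσ_d(y) dt`. -/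
def L2DiscSq (d N : ℕ) (x : Fin N → EuclideanSpace ℝ (Fin (d + 1))) : ℝ :=
  ∫ t in Set.Icc (-1 : ℝ) 1, ∫ y,
    ((Nat.card {k : Fin N // t ≤ ⟪y, x k⟫} : ℝ) / N
      - (sigmaMeasure d {z | t ≤ ⟪y, z⟫}).toReal) ^ 2 ∂ sigmaMeasure d

/-- Spherical cap `L²` discrepancy. -/
def L2Disc (d N : ℕ) (x : Fin N → EuclideanSpace ℝ (Fin (d + 1))) : ℝ :=
  Real.sqrt (L2DiscSq d N x)

/-! Since `∫ t in -1..1, 1{t ≤ a} 1{t ≤ b} = 1 + min a b = 1 + (a + b) / 2 - |a - b| / 2`,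
rotation invariance of `σ` gives, for probability measures `μ` and `ν` on the sphere and any unit
vector `e`, `∫∫ μ(C(y;t)) ν(C(y;t)) dσ(y) dt = 1 - (κ / 2) ∫∫ |x - z| dμ(x) dν(z)`, where
`κ = ∫ |⟪e, z⟫| dσ(z)`. Expanding the square in the discrepancy of `ν` leaves only the energies of
`ν` and of `σ`, because `∫ |x - z| dσ(z)` does not depend on the unit vector `x`.

It remains to see that `κ = 2 H_d(B^d) / H_d(S^d)`. By rotation invariance, a cone with apex `0`
takes up the same proportion of the unit ball as of the sphere, and the mean of `|⟪e, ·⟫|` is the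
same multiple of the mean of the norm on both. Comparing a thin cone with the spherical cap it cuts
out, which orthogonal projection along the axis flattens almost isometrically, relates `H_d(S^d)` to
Lebesgue volumes up to factors that tend to `1` as the cone shrinks to its axis. -/

section RotationInvariant

variable {E : Type*} [NormedAddCommGroup E] [InnerProductSpace ℝ E]

lemma exists_linearIsometryEquiv_apply_eq {v w : E} (h : ‖v‖ = ‖w‖) :
    ∃ L : E ≃ₗᵢ[ℝ] E, L v = w :=
  ⟨_, Submodule.reflection_sub h⟩

variable [MeasurableSpace E]

/-- A measure on an inner product space is rotation invariant if every linear isometric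
automorphism preserves it; orientation-reversing automorphisms are included. -/
def IsRotationInvariant (μ : Measure E) : Prop :=
  ∀ L : E ≃ₗᵢ[ℝ] E, MeasurePreserving L μ μ

lemma isRotationInvariant_hausdorffMeasure [BorelSpace E] (s : ℝ) :
    IsRotationInvariant (μH[s] : Measure E) :=
  fun L ↦ L.toIsometryEquiv.measurePreserving_hausdorffMeasure s

lemma isRotationInvariant_volume [BorelSpace E] [FiniteDimensional ℝ E] :
    IsRotationInvariant (volume : Measure E) :=
  fun L ↦ L.measurePreserving

/-- The solid circular cone with axis `e` of the vectors whose angle with the unit vector `e` has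
cosine at least `s`, together with the apex `0`. -/
def circularCone (e : E) (s : ℝ) : Set E := {x | s * ‖x‖ ≤ ⟪e, x⟫}

namespace IsRotationInvariant

variable {μ ν : Measure E}

lemma const_smul (hμ : IsRotationInvariant μ) (c : ℝ≥0∞) : IsRotationInvariant (c • μ) :=
  fun L ↦ (hμ L).smul_measure c

lemma restrict (hμ : IsRotationInvariant μ) {s : Set E} (hs : MeasurableSet s)
    (hL : ∀ L : E ≃ₗᵢ[ℝ] E, L ⁻¹' s = s) : IsRotationInvariant (μ.restrict s) := fun L ↦ by
  simpa only [hL L] using (hμ L).restrict_preimage hs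

lemma restrict_closedBall [BorelSpace E] (hμ : IsRotationInvariant μ) (r : ℝ) :
    IsRotationInvariant (μ.restrict (closedBall 0 r)) :=
  hμ.restrict isClosed_closedBall.measurableSet fun L ↦ by
    rw [L.preimage_closedBall, map_zero]

lemma restrict_sphere [BorelSpace E] (hμ : IsRotationInvariant μ) (r : ℝ) :
    IsRotationInvariant (μ.restrict (sphere 0 r)) :=
  hμ.restrict isClosed_sphere.measurableSet fun L ↦ by
    rw [L.preimage_sphere, map_zero]

variable [BorelSpace E]

lemma integral_kernel_eq (hμ : IsRotationInvariant μ) {g : E → E → ℝ}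
    (hg : ∀ (L : E ≃ₗᵢ[ℝ] E) x z, g (L x) (L z) = g x z) {v w : E} (h : ‖v‖ = ‖w‖) :
    ∫ z, g v z ∂μ = ∫ z, g w z ∂μ := by
  obtain ⟨L, rfl⟩ := exists_linearIsometryEquiv_apply_eq h
  calc ∫ z, g v z ∂μ = ∫ z, g (L v) (L z) ∂μ := by simp only [hg]
    _ = ∫ z, g (L v) z ∂μ := (hμ L).integral_comp L.toHomeomorph.measurableEmbedding _

lemma measure_kernel_eq (hμ : IsRotationInvariant μ) {S : E → Set E}
    (hS : ∀ (L : E ≃ₗᵢ[ℝ] E) x z, L z ∈ S (L x) ↔ z ∈ S x) {v w : E} (h : ‖v‖ = ‖w‖) :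
    μ (S v) = μ (S w) := by
  obtain ⟨L, rfl⟩ := exists_linearIsometryEquiv_apply_eq h
  calc μ (S v) = μ (L ⁻¹' S (L v)) := congrArg μ (Set.ext fun z ↦ (hS L v z).symm)
    _ = μ (S (L v)) := (hμ L).measure_preimage_emb L.toHomeomorph.measurableEmbedding _

lemma integral_inner_eq_zero (hμ : IsRotationInvariant μ) (v : E) : ∫ z, ⟪v, z⟫ ∂μ = 0 := by
  have h : ∫ z, ⟪v, z⟫ ∂μ = ∫ z, ⟪-v, z⟫ ∂μ :=
    hμ.integral_kernel_eq (fun L ↦ L.inner_map_map) (norm_neg v).symm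
  simp only [inner_neg_left, integral_neg] at h
  linarith

lemma integral_abs_inner (hμ : IsRotationInvariant μ) {e : E} (he : ‖e‖ = 1) (v : E) :
    ∫ z, |⟪v, z⟫| ∂μ = ‖v‖ * ∫ z, |⟪e, z⟫| ∂μ := by
  calc ∫ z, |⟪v, z⟫| ∂μ = ∫ z, |⟪‖v‖ • e, z⟫| ∂μ :=
        hμ.integral_kernel_eq (g := fun x z ↦ |⟪x, z⟫|) (fun L x z ↦ by rw [L.inner_map_map])
          (by rw [norm_smul, he, norm_norm, mul_one])
    _ = ‖v‖ * ∫ z, |⟪e, z⟫| ∂μ := by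
        simp only [real_inner_smul_left, abs_mul, abs_norm, integral_const_mul]

lemma integral_abs_inner_mul_integral_norm [SecondCountableTopology E] [SFinite μ] [SFinite ν]
    (hμ : IsRotationInvariant μ) (hν : IsRotationInvariant ν)
    (hμ_int : Integrable (fun x ↦ ‖x‖) μ) (hν_int : Integrable (fun z ↦ ‖z‖) ν)
    {e : E} (he : ‖e‖ = 1) :
    (∫ x, |⟪e, x⟫| ∂μ) * ∫ z, ‖z‖ ∂ν = (∫ z, |⟪e, z⟫| ∂ν) * ∫ x, ‖x‖ ∂μ := by
  have h_int : Integrable (Function.uncurry fun x z : E ↦ |⟪x, z⟫|) (μ.prod ν) :=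
    (hμ_int.mul_prod hν_int).mono' (by fun_prop)
      (.of_forall fun p ↦ by
        simpa only [Function.uncurry, norm_abs_eq_norm] using norm_inner_le_norm p.1 p.2)
  calc (∫ x, |⟪e, x⟫| ∂μ) * ∫ z, ‖z‖ ∂ν = ∫ z, ‖z‖ * ∫ x, |⟪e, x⟫| ∂μ ∂ν := by
        rw [integral_mul_const, mul_comm]
    _ = ∫ z, ∫ x, |⟪x, z⟫| ∂μ ∂ν := by
        simp only [← hμ.integral_abs_inner he, fun x z : E ↦ real_inner_comm z x]
    _ = ∫ x, ∫ z, |⟪x, z⟫| ∂ν ∂μ := (integral_integral_swap h_int).symm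
    _ = ∫ x, ‖x‖ * ∫ z, |⟪e, z⟫| ∂ν ∂μ := by simp only [← hν.integral_abs_inner he]
    _ = (∫ z, |⟪e, z⟫| ∂ν) * ∫ x, ‖x‖ ∂μ := by rw [integral_mul_const, mul_comm]

lemma measure_setOf_mul_norm_mul_norm_le_inner (hμ : IsRotationInvariant μ) {e : E} (he : ‖e‖ = 1)
    (s : ℝ) {x : E} (hx : x ≠ 0) :
    μ {z | s * (‖x‖ * ‖z‖) ≤ ⟪x, z⟫} = μ (circularCone e s) := by
  have hx_pos : 0 < ‖x‖ := norm_pos_iff.2 hx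
  calc μ {z | s * (‖x‖ * ‖z‖) ≤ ⟪x, z⟫}
      = μ {z | s * (‖‖x‖ • e‖ * ‖z‖) ≤ ⟪‖x‖ • e, z⟫} :=
        hμ.measure_kernel_eq (S := fun x ↦ {z | s * (‖x‖ * ‖z‖) ≤ ⟪x, z⟫})
          (fun L x z ↦ by simp only [Set.mem_ofPred_eq, L.norm_map, L.inner_map_map])
          (by rw [norm_smul, he, norm_norm, mul_one])
    _ = μ (circularCone e s) := by
        simp only [circularCone, norm_smul, he, norm_norm, mul_one, real_inner_smul_left,
          mul_left_comm s, mul_le_mul_iff_right₀ hx_pos]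

lemma measure_circularCone_mul_measure_univ [SecondCountableTopology E] [SFinite μ] [SFinite ν]
    (hμ : IsRotationInvariant μ) (hν : IsRotationInvariant ν) (hμ₀ : ∀ᵐ x ∂μ, x ≠ 0)
    (hν₀ : ∀ᵐ z ∂ν, z ≠ 0) {e : E} (he : ‖e‖ = 1) (s : ℝ) :
    μ (circularCone e s) * ν Set.univ = ν (circularCone e s) * μ Set.univ := by
  have h_meas : MeasurableSet {p : E × E | s * (‖p.1‖ * ‖p.2‖) ≤ ⟪p.1, p.2⟫} :=
    measurableSet_le (by fun_prop) (by fun_prop)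
  calc μ (circularCone e s) * ν Set.univ = ∫⁻ _, μ (circularCone e s) ∂ν :=
        (lintegral_const _).symm
    _ = ∫⁻ z, μ {x | s * (‖x‖ * ‖z‖) ≤ ⟪x, z⟫} ∂ν := lintegral_congr_ae <| hν₀.mono fun z hz ↦ by
        simp only [← hμ.measure_setOf_mul_norm_mul_norm_le_inner he s hz, mul_comm ‖z‖,
          real_inner_comm z]
    _ = ∫⁻ x, ν {z | s * (‖x‖ * ‖z‖) ≤ ⟪x, z⟫} ∂μ :=
        (Measure.prod_apply_symm h_meas).symm.trans (Measure.prod_apply h_meas)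
    _ = ∫⁻ _, ν (circularCone e s) ∂μ := lintegral_congr_ae <| hμ₀.mono fun x hx ↦
        hν.measure_setOf_mul_norm_mul_norm_le_inner he s hx
    _ = ν (circularCone e s) * μ Set.univ := lintegral_const _

end IsRotationInvariant

end RotationInvariant

section CapDiscrepancy

section SubSq

variable {α : Type*} [MeasurableSpace α] {μ : Measure α} {f g : α → ℝ}

lemma integrable_sub_sq (hff : Integrable (fun a ↦ f a * f a) μ)
    (hfg : Integrable (fun a ↦ f a * g a) μ) (hgg : Integrable (fun a ↦ g a * g a) μ) :
    Integrable (fun a ↦ (f a - g a) ^ 2) μ :=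
  ((hff.sub (hfg.const_mul 2)).add hgg).congr <| .of_forall fun a ↦ by
    simp only [Pi.add_apply, Pi.sub_apply]
    ring

lemma integral_sub_sq (hff : Integrable (fun a ↦ f a * f a) μ)
    (hfg : Integrable (fun a ↦ f a * g a) μ) (hgg : Integrable (fun a ↦ g a * g a) μ) :
    ∫ a, (f a - g a) ^ 2 ∂μ
      = ∫ a, f a * f a ∂μ - 2 * ∫ a, f a * g a ∂μ + ∫ a, g a * g a ∂μ := by
  have h_sq : ∀ a, (f a - g a) ^ 2 = f a * f a - 2 * (f a * g a) + g a * g a := fun a ↦ by ring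
  simp only [h_sq]
  rw [integral_add (by exact hff.sub (hfg.const_mul 2)) hgg,
    integral_sub hff (hfg.const_mul 2), integral_const_mul]

end SubSq

lemma measureReal_prod_apply {α β : Type*} [MeasurableSpace α] [MeasurableSpace β] {μ : Measure α}
    {ν : Measure β} [IsFiniteMeasure ν] {s : Set (α × β)} (hs : MeasurableSet s) :
    (μ.prod ν).real s = ∫ x, ν.real (Prod.mk x ⁻¹' s) ∂μ := by
  rw [measureReal_def, Measure.prod_apply hs]
  exact (integral_toReal (measurable_measure_prodMk_left hs).aemeasurable
    (.of_forall fun x ↦ measure_lt_top ν _)).symm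

lemma setIntegral_Icc_measureReal_le {α : Type*} [MeasurableSpace α] {μ : Measure α}
    [IsProbabilityMeasure μ] {X : α → ℝ} {a b : ℝ} (hab : a ≤ b) (hX : AEStronglyMeasurable X μ)
    (hXab : ∀ᵐ ω ∂μ, X ω ∈ Set.Icc a b) :
    ∫ t in Set.Icc a b, μ.real {ω | t ≤ X ω} = ∫ ω, X ω ∂μ - a := by
  have hX_int : Integrable X μ := .of_mem_Icc a b hX.aemeasurable hXab
  have h_layer := (hX_int.sub (integrable_const a)).integral_eq_integral_Ioc_meas_le (M := b - a)
    (hXab.mono fun ω h ↦ sub_nonneg.2 h.1) (hXab.mono fun ω h ↦ sub_le_sub_right h.2 a)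
  simp only [Pi.sub_apply, le_sub_iff_add_le] at h_layer
  rw [integral_sub hX_int (integrable_const a), integral_const, probReal_univ, one_smul,
    ← intervalIntegral.integral_of_le (sub_nonneg.2 hab),
    intervalIntegral.integral_comp_add_right (fun t ↦ μ.real {ω | t ≤ X ω})] at h_layer
  rw [h_layer, integral_Icc_eq_integral_Ioc, ← intervalIntegral.integral_of_le hab, zero_add,
    sub_add_cancel]

lemma integrable_norm_of_ae_norm_eq_one {E : Type*} [NormedAddCommGroup E] [MeasurableSpace E]
    {μ : Measure E} [IsFiniteMeasure μ] (hμ : ∀ᵐ z ∂μ, ‖z‖ = 1) :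
    Integrable (fun z ↦ ‖z‖) μ :=
  (integrable_const (1 : ℝ)).congr (hμ.mono fun _ h ↦ h.symm)

lemma integrable_dist_of_ae_norm_eq_one {E : Type*} [NormedAddCommGroup E] [MeasurableSpace E]
    [OpensMeasurableSpace E] [SecondCountableTopology E] {μ ν : Measure E} [IsFiniteMeasure μ]
    [IsFiniteMeasure ν] (hμ : ∀ᵐ z ∂μ, ‖z‖ = 1) (hν : ∀ᵐ z ∂ν, ‖z‖ = 1) :
    Integrable (fun p : E × E ↦ dist p.1 p.2) (μ.prod ν) :=
  (((integrable_norm_of_ae_norm_eq_one hμ).comp_fst ν).add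
    ((integrable_norm_of_ae_norm_eq_one hν).comp_snd μ)).mono' (by fun_prop)
    (.of_forall fun p ↦ by
      rw [Real.norm_of_nonneg dist_nonneg]
      exact dist_le_norm_add_norm p.1 p.2)

variable {E : Type*} [NormedAddCommGroup E] [InnerProductSpace ℝ E]

lemma inner_mem_Icc_of_norm_eq_one {x y : E} (hx : ‖x‖ = 1) (hy : ‖y‖ = 1) :
    ⟪x, y⟫ ∈ Set.Icc (-1 : ℝ) 1 :=
  abs_le.1 (by simpa only [hx, hy, mul_one] using abs_real_inner_le_norm x y)

variable [MeasurableSpace E]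

/-- The closed half-space that cuts the spherical cap `C(y;t)` out of the unit sphere. -/
def halfSpace (y : E) (t : ℝ) : Set E := {z | t ≤ ⟪y, z⟫}

/-- The squared spherical cap `L²` discrepancy of the measure `ν` from `σ`, with the centers of the
caps distributed according to `σ`. -/
def capDiscSq (σ ν : Measure E) : ℝ :=
  ∫ t in Set.Icc (-1 : ℝ) 1, ∫ y, (ν.real (halfSpace y t) - σ.real (halfSpace y t)) ^ 2 ∂σ

lemma capDiscSq_nonneg (σ ν : Measure E) : 0 ≤ capDiscSq σ ν :=
  integral_nonneg fun _ ↦ integral_nonneg fun _ ↦ sq_nonneg _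

variable {σ μ ν : Measure E}

lemma ae_min_inner_mem_Icc (hσ : ∀ᵐ z ∂σ, ‖z‖ = 1) (hμ : ∀ᵐ z ∂μ, ‖z‖ = 1)
    (hν : ∀ᵐ z ∂ν, ‖z‖ = 1) :
    ∀ᵐ q ∂σ.prod (μ.prod ν), min ⟪q.1, q.2.1⟫ ⟪q.1, q.2.2⟫ ∈ Set.Icc (-1 : ℝ) 1 := by
  filter_upwards [Measure.quasiMeasurePreserving_fst.ae hσ,
    (Measure.quasiMeasurePreserving_fst.comp Measure.quasiMeasurePreserving_snd).ae hμ,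
    (Measure.quasiMeasurePreserving_snd.comp Measure.quasiMeasurePreserving_snd).ae hν]
    with q h h₁ h₂
  obtain ⟨h₁l, h₁u⟩ := inner_mem_Icc_of_norm_eq_one h h₁
  exact ⟨le_min h₁l (inner_mem_Icc_of_norm_eq_one h h₂).1, min_le_of_left_le h₁u⟩

variable [BorelSpace E] [SecondCountableTopology E]

lemma measurableSet_halfSpace (y : E) (t : ℝ) : MeasurableSet (halfSpace y t) :=
  measurableSet_le measurable_const (by fun_prop)

lemma measurable_measureReal_halfSpace [SFinite μ] :
    Measurable fun q : ℝ × E ↦ μ.real (halfSpace q.2 q.1) := by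
  have h : MeasurableSet {p : (ℝ × E) × E | p.1.1 ≤ ⟪p.1.2, p.2⟫} :=
    measurableSet_le (by fun_prop) (by fun_prop)
  exact (measurable_measure_prodMk_left h).ennreal_toReal

lemma integrable_measureReal_halfSpace_mul {ρ : Measure (ℝ × E)} [IsFiniteMeasure ρ]
    [IsProbabilityMeasure μ] [IsProbabilityMeasure ν] :
    Integrable (fun q ↦ μ.real (halfSpace q.2 q.1) * ν.real (halfSpace q.2 q.1)) ρ :=
  .of_bound (measurable_measureReal_halfSpace.mul
    measurable_measureReal_halfSpace).aestronglyMeasurable 1 <| .of_forall fun q ↦ by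
    rw [Real.norm_of_nonneg (by positivity)]
    exact mul_le_one₀ measureReal_le_one measureReal_nonneg measureReal_le_one

namespace IsRotationInvariant

lemma integral_min_inner [IsFiniteMeasure σ] (hσ_rot : IsRotationInvariant σ)
    (hσ : ∀ᵐ z ∂σ, ‖z‖ = 1) {e : E} (he : ‖e‖ = 1) (v w : E) :
    ∫ z, min ⟪z, v⟫ ⟪z, w⟫ ∂σ = -((∫ z, |⟪e, z⟫| ∂σ) / 2 * dist v w) := by
  have h_int : ∀ u : E, Integrable (fun z ↦ ⟪u, z⟫) σ := fun u ↦
    ((integrable_norm_of_ae_norm_eq_one hσ).const_mul ‖u‖).mono' (by fun_prop)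
      (.of_forall fun z ↦ norm_inner_le_norm u z)
  have h_min : ∀ z, min ⟪z, v⟫ ⟪z, w⟫ = 2⁻¹ * (⟪w + v, z⟫ - |⟪w - v, z⟫|) := fun z ↦ by
    rw [inf_eq_half_smul_add_sub_abs_sub' ℝ, inner_add_left, inner_sub_left, smul_eq_mul,
      real_inner_comm v, real_inner_comm w, add_comm]
  simp only [h_min]
  rw [integral_const_mul, integral_sub (h_int _) (h_int _).abs, hσ_rot.integral_inner_eq_zero,
    hσ_rot.integral_abs_inner he, ← dist_eq_norm, dist_comm]
  ring

variable [IsProbabilityMeasure σ] [IsProbabilityMeasure μ] [IsProbabilityMeasure ν]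

lemma integral_measureReal_halfSpace_mul (hσ_rot : IsRotationInvariant σ)
    (hσ : ∀ᵐ z ∂σ, ‖z‖ = 1) (hμ : ∀ᵐ z ∂μ, ‖z‖ = 1) (hν : ∀ᵐ z ∂ν, ‖z‖ = 1)
    {e : E} (he : ‖e‖ = 1) :
    ∫ q, μ.real (halfSpace q.2 q.1) * ν.real (halfSpace q.2 q.1)
        ∂(volume.restrict (Set.Icc (-1 : ℝ) 1)).prod σ
      = 1 - (∫ z, |⟪e, z⟫| ∂σ) / 2 * ∫ p : E × E, dist p.1 p.2 ∂μ.prod ν := by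
  have h_meas : Measurable fun q : E × E × E ↦ min ⟪q.1, q.2.1⟫ ⟪q.1, q.2.2⟫ := by fun_prop
  have h_slice : ∀ t, ∫ y, μ.real (halfSpace y t) * ν.real (halfSpace y t) ∂σ
      = (σ.prod (μ.prod ν)).real {q | t ≤ min ⟪q.1, q.2.1⟫ ⟪q.1, q.2.2⟫} := fun t ↦ by
    rw [measureReal_prod_apply (measurableSet_le measurable_const h_meas)]
    congr! with y
    rw [← measureReal_prod_prod]
    congr 1
    ext p
    exact (le_min_iff (α := ℝ)).symm
  have h_mem := ae_min_inner_mem_Icc hσ hμ hν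
  rw [integral_prod _ integrable_measureReal_halfSpace_mul]
  simp only [h_slice]
  rw [setIntegral_Icc_measureReal_le (by norm_num) h_meas.aestronglyMeasurable h_mem,
    integral_prod_symm _ (.of_mem_Icc (-1) 1 h_meas.aemeasurable h_mem)]
  simp only [hσ_rot.integral_min_inner hσ he, integral_neg, integral_const_mul]
  ring

lemma integral_dist_prod (hσ_rot : IsRotationInvariant σ) (hσ : ∀ᵐ z ∂σ, ‖z‖ = 1)
    (hν : ∀ᵐ z ∂ν, ‖z‖ = 1) {e : E} (he : ‖e‖ = 1) :
    ∫ p : E × E, dist p.1 p.2 ∂ν.prod σ = ∫ z, dist e z ∂σ := by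
  have h_const : ∀ᵐ x ∂ν, ∫ z, dist x z ∂σ = ∫ z, dist e z ∂σ :=
    hν.mono fun x hx ↦ hσ_rot.integral_kernel_eq (fun L ↦ L.dist_map) (hx.trans he.symm)
  rw [integral_prod _ (integrable_dist_of_ae_norm_eq_one hν hσ), integral_congr_ae h_const,
    integral_const, probReal_univ, one_smul]

theorem capDiscSq_eq (hσ_rot : IsRotationInvariant σ) (hσ : ∀ᵐ z ∂σ, ‖z‖ = 1)
    (hν : ∀ᵐ z ∂ν, ‖z‖ = 1) {e : E} (he : ‖e‖ = 1) :
    capDiscSq σ ν = (∫ z, |⟪e, z⟫| ∂σ) / 2 *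
      ((∫ p : E × E, dist p.1 p.2 ∂σ.prod σ) - ∫ p : E × E, dist p.1 p.2 ∂ν.prod ν) := by
  have h_int : ∀ (α β : Measure E) [IsProbabilityMeasure α] [IsProbabilityMeasure β],
      Integrable (fun q : ℝ × E ↦ α.real (halfSpace q.2 q.1) * β.real (halfSpace q.2 q.1))
        ((volume.restrict (Set.Icc (-1) 1)).prod σ) :=
    fun α β _ _ ↦ integrable_measureReal_halfSpace_mul
  rw [capDiscSq, ← integral_prod (fun q : ℝ × E ↦
      (ν.real (halfSpace q.2 q.1) - σ.real (halfSpace q.2 q.1)) ^ 2)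
      (integrable_sub_sq (h_int ν ν) (h_int ν σ) (h_int σ σ)),
    integral_sub_sq (h_int ν ν) (h_int ν σ) (h_int σ σ),
    hσ_rot.integral_measureReal_halfSpace_mul hσ hν hν he,
    hσ_rot.integral_measureReal_halfSpace_mul hσ hν hσ he,
    hσ_rot.integral_measureReal_halfSpace_mul hσ hσ hσ he,
    hσ_rot.integral_dist_prod hσ hν he, hσ_rot.integral_dist_prod hσ hσ he]
  ring

end IsRotationInvariant

end CapDiscrepancy

section SphericalCap

lemma hausdorffMeasure_le_of_edist_le_mul {X Y : Type*} [EMetricSpace X] [MeasurableSpace X]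
    [BorelSpace X] [EMetricSpace Y] [MeasurableSpace Y] [BorelSpace Y] {f : X → Y} {K : ℝ≥0}
    {s : Set X} (hf : ∀ x ∈ s, ∀ y ∈ s, edist x y ≤ K * edist (f x) (f y)) {d : ℝ} (hd : 0 ≤ d) :
    μH[d] s ≤ (K : ℝ≥0∞) ^ d * μH[d] (f '' s) := by
  have h_anti : AntilipschitzWith K (s.domRestrict f) := fun x y ↦ hf x x.2 y y.2
  have h_le := h_anti.le_hausdorffMeasure_image hd Set.univ
  rwa [← isometry_subtype_coe.hausdorffMeasure_image (.inl hd), Set.image_univ, Set.image_univ,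
    Subtype.range_coe, Set.range_domRestrict] at h_le

/-- The spherical cap `C(e;s)` of the unit sphere. -/
def sphericalCap {E : Type*} [NormedAddCommGroup E] [InnerProductSpace ℝ E] (e : E) (s : ℝ) :
    Set E :=
  sphere 0 1 ∩ halfSpace e s

variable {d : ℕ}

/-- The orthogonal projection of `ℝ^{d+1}` along the first coordinate axis, onto `ℝ^d`. -/
def tailProj (d : ℕ) : EuclideanSpace ℝ (Fin (d + 1)) →ₗ[ℝ] EuclideanSpace ℝ (Fin d) where
  toFun x := WithLp.toLp 2 (Fin.tail x.ofLp)
  map_add' _ _ := rfl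
  map_smul' _ _ := rfl

/-- The north pole `(1, 0, …, 0)` of the unit sphere of `ℝ^{d+1}`. -/
def northPole (d : ℕ) : EuclideanSpace ℝ (Fin (d + 1)) := EuclideanSpace.single 0 1

lemma norm_northPole : ‖northPole d‖ = 1 := by
  rw [northPole, PiLp.norm_single, norm_one]

lemma inner_northPole (x : EuclideanSpace ℝ (Fin (d + 1))) : ⟪northPole d, x⟫ = x 0 := by
  rw [northPole, EuclideanSpace.inner_single_left, map_one, one_mul]

lemma norm_sq_eq_add_norm_tailProj_sq (x : EuclideanSpace ℝ (Fin (d + 1))) :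
    ‖x‖ ^ 2 = x 0 ^ 2 + ‖tailProj d x‖ ^ 2 := by
  simp only [EuclideanSpace.norm_sq_eq, Fin.sum_univ_succ, Real.norm_eq_abs, sq_abs]
  rfl

lemma norm_tailProj_le (x : EuclideanSpace ℝ (Fin (d + 1))) : ‖tailProj d x‖ ≤ ‖x‖ := by
  refine le_of_sq_le_sq ?_ (norm_nonneg x)
  rw [norm_sq_eq_add_norm_tailProj_sq x]
  exact le_add_of_nonneg_left (sq_nonneg _)

lemma lipschitzWith_tailProj : LipschitzWith 1 (tailProj d) :=
  .mk_one fun x y ↦ by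
    rw [dist_eq_norm, dist_eq_norm, ← map_sub]
    exact norm_tailProj_le _

variable {s r : ℝ}

lemma mem_sphericalCap_northPole {z : EuclideanSpace ℝ (Fin (d + 1))} :
    z ∈ sphericalCap (northPole d) s ↔ ‖z‖ = 1 ∧ s ≤ z 0 := by
  rw [sphericalCap, Set.mem_inter_iff, mem_sphere_zero_iff_norm, ← inner_northPole]
  rfl

lemma norm_tailProj_le_of_mem_sphericalCap (hs : 0 ≤ s) (hr : 0 ≤ r) (hsr : s ^ 2 + r ^ 2 = 1)
    {z : EuclideanSpace ℝ (Fin (d + 1))} (hz : z ∈ sphericalCap (northPole d) s) :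
    ‖tailProj d z‖ ≤ r := by
  obtain ⟨hz_norm, hsz⟩ := mem_sphericalCap_northPole.1 hz
  have h_split := norm_sq_eq_add_norm_tailProj_sq z
  rw [hz_norm] at h_split
  exact le_of_sq_le_sq (by nlinarith) hr

lemma tailProj_image_sphericalCap (hs : 0 ≤ s) (hr : 0 ≤ r) (hsr : s ^ 2 + r ^ 2 = 1) :
    tailProj d '' sphericalCap (northPole d) s = closedBall 0 r := by
  refine subset_antisymm ?_ fun y hy ↦ ?_
  · rintro _ ⟨z, hz, rfl⟩
    exact mem_closedBall_zero_iff.2 (norm_tailProj_le_of_mem_sphericalCap hs hr hsr hz)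
  · rw [mem_closedBall_zero_iff] at hy
    have h_height : s ^ 2 ≤ 1 - ‖y‖ ^ 2 := by nlinarith [norm_nonneg y]
    let z : EuclideanSpace ℝ (Fin (d + 1)) := WithLp.toLp 2 (Fin.cons √(1 - ‖y‖ ^ 2) y.ofLp)
    have hz : tailProj d z = y := rfl
    have hz₀ : z 0 = √(1 - ‖y‖ ^ 2) := rfl
    refine ⟨z, mem_sphericalCap_northPole.2 ⟨?_, hz₀ ▸ Real.le_sqrt_of_sq_le h_height⟩, hz⟩
    rw [← pow_eq_one_iff_of_nonneg (norm_nonneg z) two_ne_zero, norm_sq_eq_add_norm_tailProj_sq,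
      hz, hz₀, Real.sq_sqrt ((sq_nonneg s).trans h_height), sub_add_cancel]

lemma mul_dist_le_dist_tailProj (hs : 0 ≤ s) (hr : 0 ≤ r) (hsr : s ^ 2 + r ^ 2 = 1)
    {z w : EuclideanSpace ℝ (Fin (d + 1))} (hz : z ∈ sphericalCap (northPole d) s)
    (hw : w ∈ sphericalCap (northPole d) s) :
    s * dist z w ≤ dist (tailProj d z) (tailProj d w) := by
  have hPz := norm_tailProj_le_of_mem_sphericalCap hs hr hsr hz
  have hPw := norm_tailProj_le_of_mem_sphericalCap hs hr hsr hw
  obtain ⟨hz_norm, hsz⟩ := mem_sphericalCap_northPole.1 hz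
  obtain ⟨hw_norm, hsw⟩ := mem_sphericalCap_northPole.1 hw
  have hz_split := norm_sq_eq_add_norm_tailProj_sq z
  have hw_split := norm_sq_eq_add_norm_tailProj_sq w
  have h_split := norm_sq_eq_add_norm_tailProj_sq (z - w)
  rw [hz_norm] at hz_split
  rw [hw_norm] at hw_split
  rw [map_sub, PiLp.sub_apply] at h_split
  rw [dist_eq_norm, dist_eq_norm]
  set p := tailProj d z
  set q := tailProj d w
  have h_height : |z 0 - w 0| * (z 0 + w 0) = |‖p‖ - ‖q‖| * (‖p‖ + ‖q‖) := by
    rw [← abs_of_nonneg (by linarith : 0 ≤ z 0 + w 0), ← abs_mul,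
      ← abs_of_nonneg (by positivity : 0 ≤ ‖p‖ + ‖q‖), ← abs_mul, abs_eq_abs]
    exact .inr (by linarith)
  have h_slope : s * |z 0 - w 0| ≤ r * ‖p - q‖ := by
    have h_left : |z 0 - w 0| * (2 * s) ≤ |z 0 - w 0| * (z 0 + w 0) := by gcongr; linarith
    have h_right : |‖p‖ - ‖q‖| * (‖p‖ + ‖q‖) ≤ ‖p - q‖ * (2 * r) := by
      gcongr
      · exact abs_norm_sub_norm_le p q
      · linarith
    linarith
  have h_slope_sq := pow_le_pow_left₀ (by positivity) h_slope 2
  rw [mul_pow, mul_pow, sq_abs] at h_slope_sq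
  refine le_of_sq_le_sq ?_ (norm_nonneg _)
  rw [mul_pow, h_split]
  nlinarith

instance isAddHaarMeasure_hausdorffMeasure_natCast :
    (μH[(d : ℝ)] : Measure (EuclideanSpace ℝ (Fin d))).IsAddHaarMeasure := by
  simpa only [finrank_euclideanSpace_fin] using
    isAddHaarMeasure_hausdorffMeasure (E := EuclideanSpace ℝ (Fin d))

lemma hausdorffMeasure_closedBall (hr : 0 ≤ r) :
    μH[(d : ℝ)] (closedBall (0 : EuclideanSpace ℝ (Fin d)) r)
      = ENNReal.ofReal (r ^ d) * μH[(d : ℝ)] (closedBall (0 : EuclideanSpace ℝ (Fin d)) 1) := by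
  rw [Measure.addHaar_closedBall' _ _ hr, finrank_euclideanSpace_fin]

lemma le_hausdorffMeasure_sphericalCap_northPole (hs : 0 ≤ s) (hr : 0 ≤ r)
    (hsr : s ^ 2 + r ^ 2 = 1) :
    ENNReal.ofReal (r ^ d) * μH[(d : ℝ)] (closedBall (0 : EuclideanSpace ℝ (Fin d)) 1)
      ≤ μH[(d : ℝ)] (sphericalCap (northPole d) s) := by
  rw [← hausdorffMeasure_closedBall hr, ← tailProj_image_sphericalCap hs hr hsr]
  simpa only [ENNReal.coe_one, ENNReal.one_rpow, one_mul] using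
    lipschitzWith_tailProj.hausdorffMeasure_image_le d.cast_nonneg (sphericalCap (northPole d) s)

lemma hausdorffMeasure_sphericalCap_northPole_le (hs : 0 < s) (hr : 0 ≤ r)
    (hsr : s ^ 2 + r ^ 2 = 1) :
    μH[(d : ℝ)] (sphericalCap (northPole d) s)
      ≤ ENNReal.ofReal ((r / s) ^ d) *
        μH[(d : ℝ)] (closedBall (0 : EuclideanSpace ℝ (Fin d)) 1) := by
  have h_anti : ∀ z ∈ sphericalCap (northPole d) s, ∀ w ∈ sphericalCap (northPole d) s,
      edist z w ≤ (s⁻¹).toNNReal * edist (tailProj d z) (tailProj d w) := fun z hz w hw ↦ by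
    rw [edist_dist, edist_dist, ENNReal.ofNNReal_toNNReal, ← ENNReal.ofReal_mul (by positivity),
      inv_mul_eq_div]
    gcongr
    rw [le_div_iff₀' hs]
    exact mul_dist_le_dist_tailProj hs.le hr hsr hz hw
  refine (hausdorffMeasure_le_of_edist_le_mul h_anti d.cast_nonneg).trans_eq ?_
  rw [tailProj_image_sphericalCap hs.le hr hsr, hausdorffMeasure_closedBall hr, ← mul_assoc,
    ENNReal.rpow_natCast, ENNReal.ofNNReal_toNNReal, ← ENNReal.ofReal_pow (by positivity),
    ← ENNReal.ofReal_mul (by positivity), ← mul_pow, inv_mul_eq_div]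

lemma hausdorffMeasure_sphericalCap {v : EuclideanSpace ℝ (Fin (d + 1))} (hv : ‖v‖ = 1) :
    μH[(d : ℝ)] (sphericalCap v s) = μH[(d : ℝ)] (sphericalCap (northPole d) s) :=
  (isRotationInvariant_hausdorffMeasure d).measure_kernel_eq (S := (sphericalCap · s))
    (fun L x z ↦ by
      simp only [sphericalCap, halfSpace, Set.mem_inter_iff, mem_sphere_zero_iff_norm, L.norm_map,
        Set.mem_ofPred_eq, L.inner_map_map])
    (hv.trans norm_northPole.symm)

lemma sphericalCap_mem_nhdsWithin {E : Type*} [NormedAddCommGroup E] [InnerProductSpace ℝ E]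
    {v : E} (hv : ‖v‖ = 1) (hs : s < 1) : sphericalCap v s ∈ 𝓝[sphere 0 1] v := by
  refine inter_mem_nhdsWithin _ ?_
  have h_cont : ContinuousAt (fun z ↦ ⟪v, z⟫) v := by fun_prop
  exact h_cont.eventually_const_le (by simp [hv, hs])

variable (d)

lemma hausdorffMeasure_sphere_lt_top :
    μH[(d : ℝ)] (sphere (0 : EuclideanSpace ℝ (Fin (d + 1))) 1) < ∞ := by
  refine (isCompact_sphere _ _).measure_lt_top_of_nhdsWithin fun v hv ↦ ?_
  rw [mem_sphere_zero_iff_norm] at hv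
  refine ⟨_, sphericalCap_mem_nhdsWithin hv (by norm_num : (3 / 5 : ℝ) < 1), ?_⟩
  rw [hausdorffMeasure_sphericalCap hv]
  exact (hausdorffMeasure_sphericalCap_northPole_le (r := 4 / 5) (by norm_num) (by norm_num)
    (by norm_num)).trans_lt (ENNReal.mul_lt_top ENNReal.ofReal_lt_top
      (isCompact_closedBall _ _).measure_lt_top)

lemma hausdorffMeasure_sphere_pos :
    0 < μH[(d : ℝ)] (sphere (0 : EuclideanSpace ℝ (Fin (d + 1))) 1) :=
  calc 0 < μH[(d : ℝ)] (closedBall (0 : EuclideanSpace ℝ (Fin d)) 1) :=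
        measure_closedBall_pos _ _ one_pos
    _ ≤ μH[(d : ℝ)] (sphericalCap (northPole d) 0) := by
        simpa only [one_pow, ENNReal.ofReal_one, one_mul] using
          le_hausdorffMeasure_sphericalCap_northPole (d := d) le_rfl zero_le_one (by norm_num)
    _ ≤ μH[(d : ℝ)] (sphere (0 : EuclideanSpace ℝ (Fin (d + 1))) 1) :=
        measure_mono Set.inter_subset_left

end SphericalCap

section SolidOfRevolution

variable {d : ℕ} {I : Set ℝ} {ρ : ℝ → ℝ}

/-- The body swept out by rotating around the first coordinate axis of `ℝ^{d+1}`, above the set `I`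
of that axis, the region between the axis and the graph of `ρ`. -/
def solidOfRevolution (d : ℕ) (I : Set ℝ) (ρ : ℝ → ℝ) : Set (EuclideanSpace ℝ (Fin (d + 1))) :=
  {x | x 0 ∈ I ∧ ‖tailProj d x‖ ≤ ρ (x 0)}

/-- The Lebesgue measure of the unit ball of `ℝ^d`. -/
def unitBallVolume (d : ℕ) : ℝ := volume.real (closedBall (0 : EuclideanSpace ℝ (Fin d)) 1)

lemma unitBallVolume_pos (d : ℕ) : 0 < unitBallVolume d :=
  ENNReal.toReal_pos (measure_closedBall_pos _ _ one_pos).ne' measure_closedBall_lt_top.ne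

/-- `H_d(B^d)`. Mathlib does not normalize Hausdorff measure to agree with Lebesgue measure, so this
may differ from `unitBallVolume d`. -/
def unitBallArea (d : ℕ) : ℝ := μH[(d : ℝ)].real (closedBall (0 : EuclideanSpace ℝ (Fin d)) 1)

/-- `H_d(S^d)`, for the unit sphere `S^d` of `ℝ^{d+1}`. -/
def sphereArea (d : ℕ) : ℝ := μH[(d : ℝ)].real (sphere (0 : EuclideanSpace ℝ (Fin (d + 1))) 1)

lemma unitBallArea_pos (d : ℕ) : 0 < unitBallArea d :=
  ENNReal.toReal_pos (measure_closedBall_pos _ _ one_pos).ne' measure_closedBall_lt_top.ne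

lemma sphereArea_pos (d : ℕ) : 0 < sphereArea d :=
  ENNReal.toReal_pos (hausdorffMeasure_sphere_pos d).ne' (hausdorffMeasure_sphere_lt_top d).ne

lemma measurePreserving_zero_tailProj :
    MeasurePreserving (fun x : EuclideanSpace ℝ (Fin (d + 1)) ↦ (x 0, tailProj d x)) :=
  ((MeasurePreserving.id volume).prod (PiLp.volume_preserving_toLp (Fin d))).comp <|
    (volume_preserving_piFinSuccAbove (fun _ : Fin (d + 1) ↦ ℝ) 0).comp <|
      PiLp.volume_preserving_ofLp (Fin (d + 1))

lemma volume_solidOfRevolution (hI : MeasurableSet I) (hρ : Measurable ρ)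
    (hρ₀ : ∀ t ∈ I, 0 ≤ ρ t) :
    volume (solidOfRevolution d I ρ)
      = ∫⁻ t in I, ENNReal.ofReal (ρ t ^ d) *
          volume (closedBall (0 : EuclideanSpace ℝ (Fin d)) 1) := by
  let S : Set (ℝ × EuclideanSpace ℝ (Fin d)) := {p | p.1 ∈ I ∧ ‖p.2‖ ≤ ρ p.1}
  have hS : MeasurableSet S :=
    (measurable_fst hI).inter (measurableSet_le measurable_snd.norm (hρ.comp measurable_fst))
  have h_section : ∀ t, volume (Prod.mk t ⁻¹' S) = I.indicator (fun t ↦ ENNReal.ofReal (ρ t ^ d) *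
      volume (closedBall (0 : EuclideanSpace ℝ (Fin d)) 1)) t := fun t ↦ by
    by_cases ht : t ∈ I
    · have h_ball : Prod.mk t ⁻¹' S = closedBall 0 (ρ t) := by
        ext y
        simp only [S, Set.mem_preimage, Set.mem_ofPred_eq, ht, true_and, mem_closedBall_zero_iff]
      rw [Set.indicator_of_mem ht, h_ball, Measure.addHaar_closedBall' _ _ (hρ₀ t ht),
        finrank_euclideanSpace_fin]
    · have h_empty : Prod.mk t ⁻¹' S = ∅ := Set.eq_empty_of_forall_notMem fun y hy ↦ ht hy.1
      rw [Set.indicator_of_notMem ht, h_empty, measure_empty]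
  rw [← lintegral_indicator hI, ← lintegral_congr h_section, ← Measure.prod_apply hS]
  exact measurePreserving_zero_tailProj.measure_preimage hS.nullMeasurableSet

lemma map_restrict_solidOfRevolution (hI : MeasurableSet I) (hρ : Measurable ρ)
    (hρ₀ : ∀ t ∈ I, 0 ≤ ρ t) :
    (volume.restrict (solidOfRevolution d I ρ)).map (· 0)
      = (volume.restrict I).withDensity fun t ↦ ENNReal.ofReal (ρ t ^ d) *
          volume (closedBall (0 : EuclideanSpace ℝ (Fin d)) 1) := by
  ext A hA
  have h_eval : Measurable fun x : EuclideanSpace ℝ (Fin (d + 1)) ↦ x 0 := by fun_prop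
  have h_inter : (· 0) ⁻¹' A ∩ solidOfRevolution d I ρ = solidOfRevolution d (A ∩ I) ρ :=
    Set.ext fun x ↦ and_assoc.symm
  rw [Measure.map_apply h_eval hA, Measure.restrict_apply (h_eval hA), h_inter,
    volume_solidOfRevolution (hA.inter hI) hρ fun t ht ↦ hρ₀ t ht.2, withDensity_apply _ hA,
    Measure.restrict_restrict hA]

lemma setIntegral_solidOfRevolution (hI : MeasurableSet I) (hρ : Measurable ρ)
    (hρ₀ : ∀ t ∈ I, 0 ≤ ρ t) {f : ℝ → ℝ} (hf : Measurable f) :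
    ∫ x in solidOfRevolution d I ρ, f (x 0) = unitBallVolume d * ∫ t in I, f t * ρ t ^ d := by
  rw [← integral_map (φ := fun x : EuclideanSpace ℝ (Fin (d + 1)) ↦ x 0) (by fun_prop)
      hf.aestronglyMeasurable, map_restrict_solidOfRevolution hI hρ hρ₀,
    integral_withDensity_eq_integral_toReal_smul (by fun_prop) (.of_forall fun t ↦
      ENNReal.mul_lt_top ENNReal.ofReal_lt_top measure_closedBall_lt_top), ← integral_const_mul]
  refine setIntegral_congr_fun hI fun t ht ↦ ?_
  rw [smul_eq_mul, ENNReal.toReal_mul, ENNReal.toReal_ofReal (pow_nonneg (hρ₀ t ht) d),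
    ← measureReal_def, unitBallVolume]
  ring

lemma measureReal_solidOfRevolution_mul {a k : ℝ} (ha : 0 ≤ a) (hk : 0 ≤ k) :
    volume.real (solidOfRevolution d (Set.Icc 0 a) (· * k))
      = unitBallVolume d * (a ^ (d + 1) * k ^ d / (d + 1)) := by
  have h := setIntegral_solidOfRevolution (d := d) (I := Set.Icc 0 a) (ρ := (· * k))
    measurableSet_Icc (by fun_prop) (fun t ht ↦ mul_nonneg ht.1 hk)
    (measurable_const (a := (1 : ℝ)))
  simp only [setIntegral_const, smul_eq_mul, mul_one, one_mul, mul_pow] at h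
  rw [h, integral_mul_const, integral_Icc_eq_integral_Ioc, ← intervalIntegral.integral_of_le ha,
    integral_pow]
  simp only [zero_pow d.succ_ne_zero, sub_zero]
  ring

variable {s r : ℝ}

lemma mem_circularCone_northPole (hs : 0 < s) (hr : 0 ≤ r) (hsr : s ^ 2 + r ^ 2 = 1)
    {x : EuclideanSpace ℝ (Fin (d + 1))} :
    x ∈ circularCone (northPole d) s ↔ 0 ≤ x 0 ∧ ‖tailProj d x‖ ≤ x 0 * (r / s) := by
  have h_split := norm_sq_eq_add_norm_tailProj_sq x
  rw [circularCone, Set.mem_ofPred_eq, inner_northPole, mul_div_assoc', le_div_iff₀ hs]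
  constructor
  · intro h
    have hx₀ : 0 ≤ x 0 := (by positivity : 0 ≤ s * ‖x‖).trans h
    have h_sq := pow_le_pow_left₀ (by positivity) h 2
    rw [mul_pow] at h_sq
    exact ⟨hx₀, le_of_sq_le_sq (by nlinarith) (by positivity)⟩
  · rintro ⟨hx₀, h⟩
    have h_sq := pow_le_pow_left₀ (by positivity) h 2
    rw [mul_pow, mul_pow] at h_sq
    exact le_of_sq_le_sq (by nlinarith) hx₀

lemma solidOfRevolution_subset_circularCone_inter (hs : 0 < s) (hr : 0 ≤ r)
    (hsr : s ^ 2 + r ^ 2 = 1) :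
    solidOfRevolution d (Set.Icc 0 s) (· * (r / s))
      ⊆ circularCone (northPole d) s ∩ closedBall 0 1 := by
  rintro x ⟨⟨hx₀, hxs⟩, hx⟩
  have hx_cone := (mem_circularCone_northPole hs hr hsr).2 ⟨hx₀, hx⟩
  refine ⟨hx_cone, mem_closedBall_zero_iff.2 (le_of_mul_le_mul_left ?_ hs)⟩
  calc s * ‖x‖ ≤ x 0 := inner_northPole x ▸ hx_cone
    _ ≤ s * 1 := by rwa [mul_one]

lemma circularCone_inter_subset_solidOfRevolution (hs : 0 < s) (hr : 0 ≤ r)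
    (hsr : s ^ 2 + r ^ 2 = 1) :
    circularCone (northPole d) s ∩ closedBall 0 1
      ⊆ solidOfRevolution d (Set.Icc 0 1) (· * (r / s)) := by
  rintro x ⟨hx_cone, hx_ball⟩
  obtain ⟨hx₀, hx⟩ := (mem_circularCone_northPole hs hr hsr).1 hx_cone
  refine ⟨⟨hx₀, ?_⟩, hx⟩
  calc x 0 ≤ ‖x‖ := (le_abs_self _).trans (PiLp.norm_apply_le x 0)
    _ ≤ 1 := mem_closedBall_zero_iff.1 hx_ball

lemma closedBall_eq_solidOfRevolution :
    closedBall (0 : EuclideanSpace ℝ (Fin (d + 1))) 1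
      = solidOfRevolution d (Set.Icc (-1) 1) fun t ↦ √(1 - t ^ 2) := by
  ext x
  rw [mem_closedBall_zero_iff, ← sq_le_one_iff₀ (norm_nonneg x), norm_sq_eq_add_norm_tailProj_sq,
    solidOfRevolution, Set.mem_ofPred_eq, Set.mem_Icc, ← abs_le, ← sq_le_one_iff_abs_le_one]
  constructor
  · intro h
    exact ⟨by nlinarith [sq_nonneg ‖tailProj d x‖], Real.le_sqrt_of_sq_le (by linarith)⟩
  · rintro ⟨hx₀, hx⟩
    have hx_sq := (Real.le_sqrt (norm_nonneg _) (sub_nonneg.2 hx₀)).1 hx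
    linarith

end SolidOfRevolution

section BallMoments

lemma integral_mul_sqrt_one_sub_sq_pow (d : ℕ) :
    ∫ t in (0 : ℝ)..1, t * √(1 - t ^ 2) ^ d = 1 / (d + 2) := by
  have h_deriv : ∀ t ∈ Set.Ioo (0 : ℝ) 1,
      HasDerivAt (fun t ↦ -(√(1 - t ^ 2) ^ (d + 2) / (d + 2))) (t * √(1 - t ^ 2) ^ d) t := by
    intro t ht
    have h_pos : 0 < 1 - t ^ 2 := by nlinarith [ht.1, ht.2]
    refine ((((((hasDerivAt_id' t).fun_pow 2).const_sub 1).sqrt h_pos.ne').fun_pow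
      (d + 2)).div_const (d + 2 : ℝ)).fun_neg.congr_deriv ?_
    rw [show d + 2 - 1 = d + 1 from rfl, pow_succ _ d]
    push_cast
    field_simp [(Real.sqrt_pos.2 h_pos).ne']
  rw [intervalIntegral.integral_eq_sub_of_hasDerivAt_of_le zero_le_one (by fun_prop) h_deriv
    (by apply Continuous.intervalIntegrable; fun_prop)]
  simp

lemma integral_Icc_abs_mul_sqrt_pow (d : ℕ) :
    ∫ t in Set.Icc (-1 : ℝ) 1, |t| * √(1 - t ^ 2) ^ d = 2 / (d + 2) := by
  have h_int : ∀ a b : ℝ, IntervalIntegrable (fun t ↦ |t| * √(1 - t ^ 2) ^ d) volume a b :=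
    fun a b ↦ Continuous.intervalIntegrable (by fun_prop) a b
  have h_right : ∫ t in (0 : ℝ)..1, |t| * √(1 - t ^ 2) ^ d = 1 / (d + 2) := by
    rw [← integral_mul_sqrt_one_sub_sq_pow]
    refine intervalIntegral.integral_congr fun t ht ↦ ?_
    rw [Set.uIcc_of_le zero_le_one] at ht
    simp only [abs_of_nonneg ht.1]
  have h_left : ∫ t in (-1 : ℝ)..0, |t| * √(1 - t ^ 2) ^ d = 1 / (d + 2) := by
    have h_neg := intervalIntegral.integral_comp_neg (a := 0) (b := 1)
      fun t : ℝ ↦ |t| * √(1 - t ^ 2) ^ d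
    simp only [abs_neg, neg_sq, neg_zero] at h_neg
    rw [← h_neg, h_right]
  rw [integral_Icc_eq_integral_Ioc, ← intervalIntegral.integral_of_le (by norm_num),
    ← intervalIntegral.integral_add_adjacent_intervals (h_int _ 0) (h_int 0 _), h_left, h_right]
  ring

lemma integral_norm_closedBall {E : Type*} [NormedAddCommGroup E] [NormedSpace ℝ E]
    [FiniteDimensional ℝ E] [Nontrivial E] [MeasurableSpace E] [BorelSpace E] (μ : Measure E)
    [μ.IsAddHaarMeasure] :
    ∫ x in closedBall (0 : E) 1, ‖x‖ ∂μ
      = Module.finrank ℝ E / (Module.finrank ℝ E + 1) * μ.real (closedBall 0 1) := by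
  have h_radial := integral_fun_norm_addHaar μ ((Set.Iic (1 : ℝ)).indicator id)
  have h_ball : (fun x : E ↦ (Set.Iic (1 : ℝ)).indicator id ‖x‖)
      = (closedBall 0 1).indicator fun x ↦ ‖x‖ := by
    ext x
    simp only [Set.indicator, Set.mem_Iic, mem_closedBall_zero_iff, id]
  have h_integrand : (fun y : ℝ ↦ y ^ (Module.finrank ℝ E - 1) • (Set.Iic (1 : ℝ)).indicator id y)
      = (Set.Iic 1).indicator fun y ↦ y ^ Module.finrank ℝ E := by
    ext y
    rw [← Set.indicator_const_smul_apply]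
    simp only [Set.indicator, id, smul_eq_mul, ← pow_succ, Nat.sub_add_cancel Module.finrank_pos]
  rw [h_ball, integral_indicator isClosed_closedBall.measurableSet, h_integrand,
    setIntegral_indicator measurableSet_Iic, Set.Ioi_inter_Iic,
    ← intervalIntegral.integral_of_le zero_le_one, integral_pow, one_pow,
    zero_pow (Nat.succ_ne_zero _),
    ← Measure.addHaar_real_closedBall_eq_addHaar_real_ball] at h_radial
  rw [h_radial, nsmul_eq_mul, smul_eq_mul]
  ring

lemma integral_abs_inner_northPole_closedBall (d : ℕ) :
    ∫ x in closedBall (0 : EuclideanSpace ℝ (Fin (d + 1))) 1, |⟪northPole d, x⟫|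
      = 2 / (d + 2) * unitBallVolume d := by
  simp only [inner_northPole]
  rw [closedBall_eq_solidOfRevolution,
    setIntegral_solidOfRevolution (f := fun t ↦ |t|) measurableSet_Icc (by fun_prop)
      (fun t _ ↦ Real.sqrt_nonneg _) (by fun_prop), integral_Icc_abs_mul_sqrt_pow, mul_comm]

end BallMoments

section SurfaceMeasure

instance isProbabilityMeasure_sigmaMeasure (d : ℕ) : IsProbabilityMeasure (sigmaMeasure d) :=
  ProbabilityTheory.cond_isProbabilityMeasure_of_finite (hausdorffMeasure_sphere_pos d).ne'
    (hausdorffMeasure_sphere_lt_top d).ne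

lemma isRotationInvariant_sigmaMeasure (d : ℕ) : IsRotationInvariant (sigmaMeasure d) :=
  ((isRotationInvariant_hausdorffMeasure d).restrict_sphere 1).const_smul _

lemma ae_norm_eq_one_sigmaMeasure (d : ℕ) : ∀ᵐ z ∂sigmaMeasure d, ‖z‖ = 1 :=
  Measure.ae_smul_measure ((ae_restrict_mem isClosed_sphere.measurableSet).mono fun _ ↦
    mem_sphere_zero_iff_norm.1) _

lemma measureReal_sigmaMeasure_circularCone_mul (d : ℕ) (s : ℝ) :
    (sigmaMeasure d).real (circularCone (northPole d) s) * sphereArea d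
      = μH[(d : ℝ)].real (sphericalCap (northPole d) s) := by
  have h_cap : sphere 0 1 ∩ circularCone (northPole d) s = sphericalCap (northPole d) s := by
    ext z
    refine and_congr_right fun hz ↦ ?_
    rw [circularCone, halfSpace, Set.mem_ofPred_eq, Set.mem_ofPred_eq,
      mem_sphere_zero_iff_norm.1 hz, mul_one]
  have h_cond : sigmaMeasure d (circularCone (northPole d) s)
      = (μH[(d : ℝ)] (sphere (0 : EuclideanSpace ℝ (Fin (d + 1))) 1))⁻¹ *
        μH[(d : ℝ)] (sphericalCap (northPole d) s) := by
    rw [← h_cap]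
    exact ProbabilityTheory.cond_apply isClosed_sphere.measurableSet _ _
  rw [measureReal_def, h_cond, ENNReal.toReal_mul, ENNReal.toReal_inv, ← measureReal_def,
    ← measureReal_def, ← sphereArea]
  field_simp [(sphereArea_pos d).ne']

lemma measureReal_circularCone_inter_closedBall (d : ℕ) (s : ℝ) :
    volume.real (circularCone (northPole d) s ∩ closedBall 0 1)
      = (sigmaMeasure d).real (circularCone (northPole d) s) * unitBallVolume (d + 1) := by
  have h_sigma_ne : ∀ᵐ z ∂sigmaMeasure d, z ≠ 0 := (ae_norm_eq_one_sigmaMeasure d).mono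
    fun z hz ↦ norm_ne_zero_iff.1 (hz ▸ one_ne_zero)
  have h_eq := IsRotationInvariant.measure_circularCone_mul_measure_univ
    (isRotationInvariant_volume.restrict_closedBall 1) (isRotationInvariant_sigmaMeasure d)
    (Measure.ae_ne _ _) h_sigma_ne norm_northPole s
  rw [measure_univ, mul_one, Measure.restrict_apply' isClosed_closedBall.measurableSet,
    Measure.restrict_apply_univ] at h_eq
  rw [measureReal_def, h_eq, ENNReal.toReal_mul]
  rfl

lemma measureReal_circularCone_inter_closedBall_mul (d : ℕ) (s : ℝ) :
    volume.real (circularCone (northPole d) s ∩ closedBall 0 1) * sphereArea d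
      = μH[(d : ℝ)].real (sphericalCap (northPole d) s) * unitBallVolume (d + 1) := by
  rw [measureReal_circularCone_inter_closedBall, ← measureReal_sigmaMeasure_circularCone_mul]
  ring

variable {d : ℕ} {s r : ℝ}

lemma measureReal_circularCone_inter_closedBall_mem_Icc (hs : 0 < s) (hr : 0 < r)
    (hsr : s ^ 2 + r ^ 2 = 1) :
    volume.real (circularCone (northPole d) s ∩ closedBall 0 1) ∈
      Set.Icc (unitBallVolume d * (s ^ (d + 1) * (r / s) ^ d / (d + 1)))
        (unitBallVolume d * ((r / s) ^ d / (d + 1))) := by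
  have h_slope : 0 < r / s := by positivity
  have h_upper := measureReal_solidOfRevolution_mul (d := d) zero_le_one h_slope.le
  rw [one_pow, one_mul] at h_upper
  have h_solid_finite : volume (solidOfRevolution d (Set.Icc 0 1) (· * (r / s))) ≠ ∞ := by
    have h_volume := unitBallVolume_pos d
    have h_pos : 0 < volume.real (solidOfRevolution d (Set.Icc 0 1) (· * (r / s))) := by
      rw [h_upper]
      positivity
    exact (ENNReal.toReal_pos_iff.1 h_pos).2.ne
  have h_sector_finite : volume (circularCone (northPole d) s ∩ closedBall 0 1) ≠ ∞ :=
    measure_inter_ne_top_of_right_ne_top measure_closedBall_lt_top.ne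
  rw [← measureReal_solidOfRevolution_mul hs.le h_slope.le, ← h_upper]
  exact ⟨measureReal_mono (solidOfRevolution_subset_circularCone_inter hs hr.le hsr)
      h_sector_finite,
    measureReal_mono (circularCone_inter_subset_solidOfRevolution hs hr.le hsr) h_solid_finite⟩

lemma measureReal_sphericalCap_mem_Icc (hs : 0 < s) (hr : 0 ≤ r) (hsr : s ^ 2 + r ^ 2 = 1) :
    μH[(d : ℝ)].real (sphericalCap (northPole d) s) ∈
      Set.Icc (r ^ d * unitBallArea d) ((r / s) ^ d * unitBallArea d) := by
  have h_upper := hausdorffMeasure_sphericalCap_northPole_le (d := d) hs hr hsr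
  have h_upper_ne_top : ENNReal.ofReal ((r / s) ^ d) *
      μH[(d : ℝ)] (closedBall (0 : EuclideanSpace ℝ (Fin d)) 1) ≠ ∞ :=
    ENNReal.mul_ne_top ENNReal.ofReal_ne_top measure_closedBall_lt_top.ne
  have h_lower := ENNReal.toReal_mono (h_upper.trans_lt h_upper_ne_top.lt_top).ne
    (le_hausdorffMeasure_sphericalCap_northPole hs.le hr hsr)
  replace h_upper := ENNReal.toReal_mono h_upper_ne_top h_upper
  rw [ENNReal.toReal_mul, ENNReal.toReal_ofReal (by positivity)] at h_lower h_upper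
  exact ⟨h_lower, h_upper⟩

lemma pow_mul_unitBallVolume_mul_sphereArea_le (hs : 0 < s) (hr : 0 < r)
    (hsr : s ^ 2 + r ^ 2 = 1) :
    s ^ (d + 1) * (unitBallVolume d * sphereArea d)
      ≤ (d + 1) * unitBallVolume (d + 1) * unitBallArea d := by
  have h_sector := (measureReal_circularCone_inter_closedBall_mem_Icc (d := d) hs hr hsr).1
  have h_cap := (measureReal_sphericalCap_mem_Icc (d := d) hs hr.le hsr).2
  have h_sphere := (sphereArea_pos d).le
  have h_ball := (unitBallVolume_pos (d + 1)).le
  refine le_of_mul_le_mul_left ?_ (by positivity : 0 < (r / s) ^ d / (d + 1))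
  calc (r / s) ^ d / (d + 1) * (s ^ (d + 1) * (unitBallVolume d * sphereArea d))
      = unitBallVolume d * (s ^ (d + 1) * (r / s) ^ d / (d + 1)) * sphereArea d := by ring
    _ ≤ volume.real (circularCone (northPole d) s ∩ closedBall 0 1) * sphereArea d := by gcongr
    _ = μH[(d : ℝ)].real (sphericalCap (northPole d) s) * unitBallVolume (d + 1) :=
        measureReal_circularCone_inter_closedBall_mul d s
    _ ≤ (r / s) ^ d * unitBallArea d * unitBallVolume (d + 1) := by gcongr
    _ = (r / s) ^ d / (d + 1) * ((d + 1) * unitBallVolume (d + 1) * unitBallArea d) := by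
        field_simp

lemma pow_mul_unitBallVolume_mul_unitBallArea_le (hs : 0 < s) (hr : 0 < r)
    (hsr : s ^ 2 + r ^ 2 = 1) :
    s ^ d * ((d + 1) * unitBallVolume (d + 1) * unitBallArea d)
      ≤ unitBallVolume d * sphereArea d := by
  have h_sector := (measureReal_circularCone_inter_closedBall_mem_Icc (d := d) hs hr hsr).2
  have h_cap := (measureReal_sphericalCap_mem_Icc (d := d) hs hr.le hsr).1
  have h_sphere := (sphereArea_pos d).le
  have h_ball := (unitBallVolume_pos (d + 1)).le
  refine le_of_mul_le_mul_left ?_ (by positivity : 0 < (r / s) ^ d / (d + 1))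
  calc (r / s) ^ d / (d + 1) * (s ^ d * ((d + 1) * unitBallVolume (d + 1) * unitBallArea d))
      = (r / s * s) ^ d * unitBallArea d * unitBallVolume (d + 1) := by
        rw [mul_pow]
        field_simp
    _ = r ^ d * unitBallArea d * unitBallVolume (d + 1) := by rw [div_mul_cancel₀ r hs.ne']
    _ ≤ μH[(d : ℝ)].real (sphericalCap (northPole d) s) * unitBallVolume (d + 1) := by gcongr
    _ = volume.real (circularCone (northPole d) s ∩ closedBall 0 1) * sphereArea d :=
        (measureReal_circularCone_inter_closedBall_mul d s).symm
    _ ≤ unitBallVolume d * ((r / s) ^ d / (d + 1)) * sphereArea d := by gcongr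
    _ = (r / s) ^ d / (d + 1) * (unitBallVolume d * sphereArea d) := by ring

lemma le_of_forall_pow_mul_le {n : ℕ} {a b : ℝ} (h : ∀ s ∈ Set.Ioo (0 : ℝ) 1, s ^ n * a ≤ b) :
    a ≤ b := by
  have h_cont : Continuous fun s : ℝ ↦ s ^ n * a := by fun_prop
  have h_tendsto : Tendsto (fun s : ℝ ↦ s ^ n * a) (𝓝[<] 1) (𝓝 a) := by
    simpa only [one_pow, one_mul] using (h_cont.tendsto 1).mono_left nhdsWithin_le_nhds
  exact le_of_tendsto h_tendsto (mem_of_superset (Ioo_mem_nhdsLT zero_lt_one) h)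

lemma unitBallVolume_mul_sphereArea (d : ℕ) :
    unitBallVolume d * sphereArea d = (d + 1) * unitBallVolume (d + 1) * unitBallArea d := by
  have h_compl : ∀ s ∈ Set.Ioo (0 : ℝ) 1, 0 < √(1 - s ^ 2) ∧ s ^ 2 + √(1 - s ^ 2) ^ 2 = 1 :=
    fun s hs ↦ by
      have h_pos : 0 < 1 - s ^ 2 := by nlinarith [hs.1, hs.2]
      exact ⟨Real.sqrt_pos.2 h_pos, by rw [Real.sq_sqrt h_pos.le, add_sub_cancel]⟩
  exact le_antisymm
    (le_of_forall_pow_mul_le fun s hs ↦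
      pow_mul_unitBallVolume_mul_sphereArea_le hs.1 (h_compl s hs).1 (h_compl s hs).2)
    (le_of_forall_pow_mul_le fun s hs ↦
      pow_mul_unitBallVolume_mul_unitBallArea_le hs.1 (h_compl s hs).1 (h_compl s hs).2)

theorem integral_abs_inner_sigmaMeasure (d : ℕ) :
    ∫ z, |⟪northPole d, z⟫| ∂sigmaMeasure d = 2 * unitBallArea d / sphereArea d := by
  have h_moments := IsRotationInvariant.integral_abs_inner_mul_integral_norm
    (isRotationInvariant_volume.restrict_closedBall 1) (isRotationInvariant_sigmaMeasure d)
    (continuous_norm.continuousOn.integrableOn_compact (isCompact_closedBall 0 1))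
    (integrable_norm_of_ae_norm_eq_one (ae_norm_eq_one_sigmaMeasure d)) norm_northPole
  rw [integral_abs_inner_northPole_closedBall, integral_norm_closedBall, ← unitBallVolume,
    integral_congr_ae (ae_norm_eq_one_sigmaMeasure d), integral_const, probReal_univ, one_smul,
    finrank_euclideanSpace_fin] at h_moments
  have h_ball := unitBallVolume_pos (d + 1)
  have h_sphere := sphereArea_pos d
  push_cast at h_moments
  set κ := ∫ z, |⟪northPole d, z⟫| ∂sigmaMeasure d
  have h_κ : κ * ((d + 1) * unitBallVolume (d + 1)) = 2 * unitBallVolume d := by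
    refine mul_right_cancel₀ (by positivity : (d + 2 : ℝ) ≠ 0) ?_
    field_simp at h_moments
    linear_combination -h_moments
  rw [eq_div_iff h_sphere.ne']
  refine mul_right_cancel₀ (by positivity : (d + 1) * unitBallVolume (d + 1) ≠ 0) ?_
  calc κ * sphereArea d * ((d + 1) * unitBallVolume (d + 1))
      = 2 * (unitBallVolume d * sphereArea d) := by rw [mul_right_comm, h_κ, mul_assoc]
    _ = 2 * unitBallArea d * ((d + 1) * unitBallVolume (d + 1)) := by
        rw [unitBallVolume_mul_sphereArea]
        ring

end SurfaceMeasure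

section EmpiricalMeasure

variable {α ι : Type*} [MeasurableSpace α] [Fintype ι] {x : ι → α}

/-- The uniform probability measure on the points of a finite configuration, counted with
multiplicity; it is `0` for the empty configuration. -/
def empiricalMeasure (x : ι → α) : Measure α :=
  (Fintype.card ι : ℝ≥0∞)⁻¹ • ∑ i, Measure.dirac (x i)

instance isProbabilityMeasure_empiricalMeasure [Nonempty ι] :
    IsProbabilityMeasure (empiricalMeasure x) where
  measure_univ := by
    simp only [empiricalMeasure, Measure.smul_apply, Measure.finsetSum_apply, measure_univ,
      Finset.sum_const, Finset.card_univ, nsmul_eq_mul, mul_one, smul_eq_mul]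
    exact ENNReal.inv_mul_cancel (by simp) (by simp)

lemma ae_empiricalMeasure [MeasurableSingletonClass α] {p : α → Prop} (h : ∀ i, p (x i)) :
    ∀ᵐ z ∂empiricalMeasure x, p z := by
  refine Measure.ae_smul_measure ?_ _
  rw [← Measure.sum_fintype, Measure.ae_sum_iff]
  simpa using h

lemma integral_empiricalMeasure [MeasurableSingletonClass α] {E : Type*} [NormedAddCommGroup E]
    [NormedSpace ℝ E] [CompleteSpace E] (f : α → E) :
    ∫ z, f z ∂empiricalMeasure x = (Fintype.card ι : ℝ)⁻¹ • ∑ i, f (x i) := by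
  rw [empiricalMeasure, integral_smul_measure,
    integral_finsetSum_measure fun i _ ↦ integrable_dirac enorm_lt_top]
  simp only [integral_dirac, ENNReal.toReal_inv, ENNReal.toReal_natCast]

lemma measureReal_empiricalMeasure [MeasurableSingletonClass α] {s : Set α}
    (hs : MeasurableSet s) :
    (empiricalMeasure x).real s = Nat.card {i // x i ∈ s} / Fintype.card ι := by
  classical
  rw [← integral_indicator_one hs, integral_empiricalMeasure, smul_eq_mul, inv_mul_eq_div]
  simp only [Set.indicator, Pi.one_apply, Finset.sum_boole, Nat.card_eq_fintype_card,
    Fintype.card_subtype]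

lemma integral_dist_prod_empiricalMeasure {E : Type*} [NormedAddCommGroup E] [MeasurableSpace E]
    [BorelSpace E] [SecondCountableTopology E] [Nonempty ι] {x : ι → E} (hx : ∀ i, ‖x i‖ = 1) :
    ∫ p : E × E, dist p.1 p.2 ∂(empiricalMeasure x).prod (empiricalMeasure x)
      = 1 / (Fintype.card ι : ℝ) ^ 2 * ∑ j, ∑ k, dist (x j) (x k) := by
  rw [integral_prod _ (integrable_dist_of_ae_norm_eq_one (ae_empiricalMeasure hx)
    (ae_empiricalMeasure hx))]
  simp only [integral_empiricalMeasure, smul_eq_mul]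
  rw [← Finset.mul_sum]
  ring

end EmpiricalMeasure

lemma L2Disc_sq {d N : ℕ} (x : Fin N → EuclideanSpace ℝ (Fin (d + 1))) :
    L2Disc d N x ^ 2 = capDiscSq (sigmaMeasure d) (empiricalMeasure x) := by
  have h_eq : L2DiscSq d N x = capDiscSq (sigmaMeasure d) (empiricalMeasure x) := by
    simp only [capDiscSq, measureReal_empiricalMeasure (measurableSet_halfSpace _ _),
      Fintype.card_fin]
    rfl
  rw [L2Disc, h_eq, Real.sq_sqrt (capDiscSq_nonneg _ _)]

theorem stolarsky_invariance_principle_general (d : ℕ)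
    {ν : Measure (EuclideanSpace ℝ (Fin (d + 1)))} [IsProbabilityMeasure ν]
    (hν : ∀ᵐ z ∂ν, ‖z‖ = 1) :
    (∫ p, dist p.1 p.2 ∂ν.prod ν) + sphereArea d / unitBallArea d * capDiscSq (sigmaMeasure d) ν
      = ∫ p, dist p.1 p.2 ∂(sigmaMeasure d).prod (sigmaMeasure d) := by
  have h_sphere := sphereArea_pos d
  have h_ball := unitBallArea_pos d
  rw [(isRotationInvariant_sigmaMeasure d).capDiscSq_eq (ae_norm_eq_one_sigmaMeasure d) hν
    norm_northPole, integral_abs_inner_sigmaMeasure]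
  field_simp
  ring

/-- **Stolarsky's invariance principle.** For `d ≥ 2` and any `N` points on the unit
sphere `S^d ⊂ ℝ^{d+1}`,
`(1/N²) ∑_{j,k} |x_j − x_k| + (H_d(S^d)/H_d(B^d)) · D_{L2,C}(X_N)² = ∫∫ |x − y| dσ_d dσ_d`. -/
theorem stolarsky_invariance_principle (d : ℕ) (hd : 2 ≤ d) (N : ℕ) (hN : 0 < N)
    (x : Fin N → EuclideanSpace ℝ (Fin (d + 1)))
    (hx : ∀ k, x k ∈ sphere (0 : EuclideanSpace ℝ (Fin (d + 1))) 1) :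
    (1 / (N : ℝ) ^ 2) * ∑ j, ∑ k, dist (x j) (x k)
      + ((μH[(d : ℝ)] (sphere (0 : EuclideanSpace ℝ (Fin (d + 1))) 1)).toReal
          / (μH[(d : ℝ)] (closedBall (0 : EuclideanSpace ℝ (Fin d)) 1)).toReal)
        * (L2Disc d N x) ^ 2
      = ∫ p : EuclideanSpace ℝ (Fin (d + 1)) × EuclideanSpace ℝ (Fin (d + 1)),
          dist p.1 p.2 ∂ (sigmaMeasure d).prod (sigmaMeasure d) := by
  have : Nonempty (Fin N) := Fin.pos_iff_nonempty.1 hN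
  have hx_norm : ∀ k, ‖x k‖ = 1 := fun k ↦ mem_sphere_zero_iff_norm.1 (hx k)
  simpa only [L2Disc_sq, integral_dist_prod_empiricalMeasure hx_norm, Fintype.card_fin, sphereArea,
    unitBallArea, measureReal_def]
    using stolarsky_invariance_principle_general d (ae_empiricalMeasure hx_norm)
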